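/- In the minimalistic affine super Yangian Y_ℏ(ŝl(m|n,Π)) with recursively defined higher generators, the odd Serre relation holds in all degrees: for every odd simple root α_j and all r, s ∈ ℤ_{≥0}, [[x^±_{α_{j−1},r}, x^±_{α_j,0}], [x^±_{α_j,0}, x^±_{α_{j+1},s}]] = 0. -/

import Mathlib

/-!
Common framework for formalizing statements about affine super Yangians
`Y_ℏ(ŝl(m|n,Π))` attached to a simple root system `Π` of the affine
Kac–Moody superalgebra `ŝl(m|n)` of type `A^{(1)}(m−1|n−1)`.
-/

noncomputable section

namespace ASY

open scoped TensorProduct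

/-- The ground ring `ℂ[ℏ]`. -/
abbrev R : Type := Polynomial ℂ

/-- The formal deformation parameter `ℏ`. -/
def hbar : R := Polynomial.X

/-- `1/2` as an element of `ℂ[ℏ]`. -/
def half : R := Polynomial.C (1/2 : ℂ)

/-- The sign `(−1)^{p(a)p(b)}` attached to parities `pa`, `pb`. -/
def sg (pa pb : Bool) : R := if pa && pb then -1 else 1

section SuperOps

variable {Y : Type*} [Ring Y] [Algebra R Y]

/-- The supercommutator `[a,b] = ab − (−1)^{p(a)p(b)} ba` of homogeneous elements of
parities `pa` and `pb`. -/
def sbr (pa pb : Bool) (x y : Y) : Y := x * y - sg pa pb • (y * x)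

/-- The super anticommutator `{a,b} = ab + (−1)^{p(a)p(b)} ba`. -/
def sac (pa pb : Bool) (x y : Y) : Y := x * y + sg pa pb • (y * x)

/-- Iterated super-adjoint action `(ad x)^k y` for `x` of parity `pa` and `y` of parity `pb`. -/
def adN (pa pb : Bool) (x : Y) : ℕ → Y → Y
  | 0, y => y
  | k + 1, y => sbr pa (xor pb (pa && decide (k % 2 = 1))) x (adN pa pb x k y)

/-- Iterated super-bracket `[x₁,[x₂,…,[x_k, y]…]]`, all `xᵢ` of parity `pa`, `y` of parity `pb`. -/
def adSeq (pa pb : Bool) : List Y → Y → Y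
  | [], y => y
  | x :: l, y => sbr pa (xor pb (pa && decide (l.length % 2 = 1))) x (adSeq pa pb l y)

end SuperOps

/-- A simple root system `Π` of the affine Kac–Moody superalgebra `ŝl(m|n)`
(type `A^{(1)}(m−1|n−1)`): a cyclic arrangement of the `m + n` weights
`ε₁,…,ε_m, δ₁,…,δ_n`, recorded by the type of the weight at each position
(`false` = an `ε`-weight of norm `+1`, `true` = a `δ`-weight of norm `−1`);
the simple roots are `α_i = e_i − e_{i+1}` (indices mod `m+n`). -/
structure SimpleRootSystem (m n : ℕ) : Type where
  /-- the type of the weight at each position -/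
  τ : Fin (m + n) → Bool
  /-- there are exactly `n` weights of `δ`-type -/
  card_delta : (Finset.univ.filter fun k => τ k = true).card = n

namespace SimpleRootSystem

variable {m n : ℕ}

/-- The norm `(e_k, e_k) = ±1` of the `k`-th weight. -/
def w (P : SimpleRootSystem m n) (k : Fin (m + n)) : ℤ := if P.τ k then -1 else 1

variable [NeZero (m + n)]

/-- The coefficient of `e_k` in the simple root `α_i = e_i − e_{i+1}`. -/
def coeffα (i k : Fin (m + n)) : ℤ := (if k = i then 1 else 0) - (if k = i + 1 then 1 else 0)

/-- The (symmetric) Cartan matrix `a_{ij} = (α_i, α_j)` of `Π`. -/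
def a (P : SimpleRootSystem m n) (i j : Fin (m + n)) : ℤ :=
  ∑ k, P.w k * coeffα i k * coeffα j k

/-- The parity of the simple root `α_i` (`true` iff `α_i` is odd, iff `a_{ii} = 0`). -/
def par (P : SimpleRootSystem m n) (i : Fin (m + n)) : Bool := P.τ i != P.τ (i + 1)

/-- The reflection `s_{α_i}` on simple root systems: on the weight arrangement it
swaps the weights at positions `i` and `i+1`.  For `α_i` even it preserves `Π`;
for `α_i` odd it is the odd reflection `Π ↦ Π₁`. -/
def reflect (P : SimpleRootSystem m n) (i : Fin (m + n)) : SimpleRootSystem m n where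
  τ := P.τ ∘ Equiv.swap i (i + 1)
  card_delta := by
    have h1 : (Finset.univ.filter fun k => (P.τ ∘ Equiv.swap i (i + 1)) k = true).card
        = (Finset.univ.filter fun k => P.τ k = true).card :=
      Finset.card_equiv (Equiv.swap i (i + 1)) (fun k => by simp)
    rw [h1, P.card_delta]

/-- Applying a word of simple reflections to a simple root system. -/
def applyWord (P : SimpleRootSystem m n) : List (Fin (m + n)) → SimpleRootSystem m n
  | [] => P
  | c :: l => applyWord (P.reflect c) l

/-- The word consists of even reflections at every stage (i.e. it represents an
element of the Weyl group, generated by even reflections). -/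
def IsEvenWord (P : SimpleRootSystem m n) : List (Fin (m + n)) → Prop
  | [] => True
  | c :: l => P.par c = false ∧ IsEvenWord (P.reflect c) l

end SimpleRootSystem

end ASY

namespace ASY

/-- Generators of the minimalistic affine super Yangian: `x^±_{α_i,r}`, `h_{α_i,r}`
with `i ∈ I` and `r ∈ {0,1}`. -/
inductive MGen (N : ℕ) : Type
  | xp (i : Fin N) (r : Fin 2)
  | xm (i : Fin N) (r : Fin 2)
  | h (i : Fin N) (r : Fin 2)

/-- The free algebra on the minimalistic generators. -/
abbrev MFree (m n : ℕ) : Type := FreeAlgebra R (MGen (m + n))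

section MinDefs

variable {m n : ℕ}

/-- `x^+_{α_i,r}` in the free algebra. -/
def MXp (i : Fin (m + n)) (r : Fin 2) : MFree m n := FreeAlgebra.ι R (MGen.xp i r)

/-- `x^−_{α_i,r}` in the free algebra. -/
def MXm (i : Fin (m + n)) (r : Fin 2) : MFree m n := FreeAlgebra.ι R (MGen.xm i r)

/-- `h_{α_i,r}` in the free algebra. -/
def MH (i : Fin (m + n)) (r : Fin 2) : MFree m n := FreeAlgebra.ι R (MGen.h i r)

/-- `h̃_{α_i,1} = h_{α_i,1} − (ℏ/2) h_{α_i,0}²` in the free algebra. -/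
def MHt (i : Fin (m + n)) : MFree m n := MH i 1 - (half * hbar) • (MH i 0 * MH i 0)

variable [NeZero (m + n)]

/-- The defining relations of the minimalistic affine super Yangian `Y_ℏ(ŝl(m|n,Π))`. -/
inductive MRel (P : SimpleRootSystem m n) : MFree m n → MFree m n → Prop
  /-- `[h_{α_i,r}, h_{α_j,s}] = 0` -/
  | hh (i j : Fin (m + n)) (r s : Fin 2) :
      MRel P (sbr false false (MH i r) (MH j s)) 0
  /-- `[x^+_{α_i,0}, x^−_{α_j,0}] = δ_{ij} h_{α_i,0}` -/
  | pm00 (i j : Fin (m + n)) :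
      MRel P (sbr (P.par i) (P.par j) (MXp i 0) (MXm j 0)) (if i = j then MH i 0 else 0)
  /-- `[x^+_{α_i,1}, x^−_{α_j,0}] = δ_{ij} h_{α_i,1}` -/
  | pm10 (i j : Fin (m + n)) :
      MRel P (sbr (P.par i) (P.par j) (MXp i 1) (MXm j 0)) (if i = j then MH i 1 else 0)
  /-- `[x^+_{α_i,0}, x^−_{α_j,1}] = δ_{ij} h_{α_i,1}` -/
  | pm01 (i j : Fin (m + n)) :
      MRel P (sbr (P.par i) (P.par j) (MXp i 0) (MXm j 1)) (if i = j then MH i 1 else 0)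
  /-- `[h_{α_i,0}, x^+_{α_j,r}] = a_{ij} x^+_{α_j,r}` -/
  | hxp (i j : Fin (m + n)) (r : Fin 2) :
      MRel P (sbr false (P.par j) (MH i 0) (MXp j r)) (((P.a i j : ℤ) : R) • MXp j r)
  /-- `[h_{α_i,0}, x^−_{α_j,r}] = −a_{ij} x^−_{α_j,r}` -/
  | hxm (i j : Fin (m + n)) (r : Fin 2) :
      MRel P (sbr false (P.par j) (MH i 0) (MXm j r)) ((-(P.a i j : ℤ) : R) • MXm j r)
  /-- `[x^+_{α_i,1},x^+_{α_j,0}] − [x^+_{α_i,0},x^+_{α_j,1}] = (ℏ a_{ij}/2){x^+_{α_i,0},x^+_{α_j,0}}` -/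
  | mixp (i j : Fin (m + n)) :
      MRel P (sbr (P.par i) (P.par j) (MXp i 1) (MXp j 0)
          - sbr (P.par i) (P.par j) (MXp i 0) (MXp j 1))
        ((half * hbar * ((P.a i j : ℤ) : R)) • sac (P.par i) (P.par j) (MXp i 0) (MXp j 0))
  /-- `[x^−_{α_i,1},x^−_{α_j,0}] − [x^−_{α_i,0},x^−_{α_j,1}] = −(ℏ a_{ij}/2){x^−_{α_i,0},x^−_{α_j,0}}` -/
  | mixm (i j : Fin (m + n)) :
      MRel P (sbr (P.par i) (P.par j) (MXm i 1) (MXm j 0)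
          - sbr (P.par i) (P.par j) (MXm i 0) (MXm j 1))
        ((-(half * hbar * ((P.a i j : ℤ) : R))) • sac (P.par i) (P.par j) (MXm i 0) (MXm j 0))
  /-- `[h̃_{α_i,1}, x^+_{α_j,0}] = a_{ij} x^+_{α_j,1}` -/
  | htxp (i j : Fin (m + n)) :
      MRel P (sbr false (P.par j) (MHt i) (MXp j 0)) (((P.a i j : ℤ) : R) • MXp j 1)
  /-- `[h̃_{α_i,1}, x^−_{α_j,0}] = −a_{ij} x^−_{α_j,1}` -/
  | htxm (i j : Fin (m + n)) :
      MRel P (sbr false (P.par j) (MHt i) (MXm j 0)) ((-(P.a i j : ℤ) : R) • MXm j 1)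
  /-- Serre relation `(ad x^+_{α_i,0})^{1+|a_{ij}|}(x^+_{α_j,0}) = 0`, `i ≠ j` -/
  | serrep (i j : Fin (m + n)) (hij : i ≠ j) :
      MRel P (adN (P.par i) (P.par j) (MXp i 0) (1 + (P.a i j).natAbs) (MXp j 0)) 0
  /-- Serre relation `(ad x^−_{α_i,0})^{1+|a_{ij}|}(x^−_{α_j,0}) = 0`, `i ≠ j` -/
  | serrem (i j : Fin (m + n)) (hij : i ≠ j) :
      MRel P (adN (P.par i) (P.par j) (MXm i 0) (1 + (P.a i j).natAbs) (MXm j 0)) 0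
  /-- `[x^+_{α_t,0}, x^+_{α_t,0}] = 0` for `α_t` odd -/
  | oddp (t : Fin (m + n)) (ht : P.par t = true) :
      MRel P (sbr true true (MXp t 0) (MXp t 0)) 0
  /-- `[x^−_{α_t,0}, x^−_{α_t,0}] = 0` for `α_t` odd -/
  | oddm (t : Fin (m + n)) (ht : P.par t = true) :
      MRel P (sbr true true (MXm t 0) (MXm t 0)) 0
  /-- `[[x^+_{α_{t−1},0},x^+_{α_t,0}],[x^+_{α_t,0},x^+_{α_{t+1},0}]] = 0` for `α_t` odd -/
  | oddSp (t : Fin (m + n)) (ht : P.par t = true) :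
      MRel P (sbr (xor (P.par (t - 1)) true) (xor true (P.par (t + 1)))
        (sbr (P.par (t - 1)) true (MXp (t - 1) 0) (MXp t 0))
        (sbr true (P.par (t + 1)) (MXp t 0) (MXp (t + 1) 0))) 0
  /-- `[[x^−_{α_{t−1},0},x^−_{α_t,0}],[x^−_{α_t,0},x^−_{α_{t+1},0}]] = 0` for `α_t` odd -/
  | oddSm (t : Fin (m + n)) (ht : P.par t = true) :
      MRel P (sbr (xor (P.par (t - 1)) true) (xor true (P.par (t + 1)))
        (sbr (P.par (t - 1)) true (MXm (t - 1) 0) (MXm t 0))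
        (sbr true (P.par (t + 1)) (MXm t 0) (MXm (t + 1) 0))) 0

/-- The minimalistic affine super Yangian `Y_ℏ(ŝl(m|n,Π))`, presented on the
generators `x^±_{α_i,r}`, `h_{α_i,r}` (`r ∈ {0,1}`) by the minimalistic relations. -/
abbrev Ymin (P : SimpleRootSystem m n) : Type := RingQuot (MRel P)

/-- The canonical projection from the free algebra onto `Y_ℏ(ŝl(m|n,Π))`. -/
def mkY (P : SimpleRootSystem m n) : MFree m n →ₐ[R] Ymin P := RingQuot.mkAlgHom R (MRel P)

/-- The generator `x^+_{α_i,r}` of `Y_ℏ(ŝl(m|n,Π))`. -/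
def xgp (P : SimpleRootSystem m n) (i : Fin (m + n)) (r : Fin 2) : Ymin P := mkY P (MXp i r)

/-- The generator `x^−_{α_i,r}` of `Y_ℏ(ŝl(m|n,Π))`. -/
def xgm (P : SimpleRootSystem m n) (i : Fin (m + n)) (r : Fin 2) : Ymin P := mkY P (MXm i r)

/-- The generator `h_{α_i,r}` of `Y_ℏ(ŝl(m|n,Π))`. -/
def hg (P : SimpleRootSystem m n) (i : Fin (m + n)) (r : Fin 2) : Ymin P := mkY P (MH i r)

/-- The element `h̃_{α_i,1} = h_{α_i,1} − (ℏ/2)h_{α_i,0}²` of `Y_ℏ(ŝl(m|n,Π))`. -/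
def htilY (P : SimpleRootSystem m n) (i : Fin (m + n)) : Ymin P := mkY P (MHt i)

/-- The scalar `a_{i+1,i}⁻¹ ∈ ℂ ⊆ ℂ[ℏ]`. -/
def acoef (P : SimpleRootSystem m n) (i : Fin (m + n)) : R :=
  Polynomial.C (((P.a (i + 1) i : ℤ) : ℂ)⁻¹)

/-- The recursively defined higher generators
`x^+_{α_i,r+1} := a_{i+1,i}⁻¹ [h̃_{α_{i+1},1}, x^+_{α_i,r}]` (`r ≥ 1`). -/
def xpn (P : SimpleRootSystem m n) (i : Fin (m + n)) : ℕ → Ymin P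
  | 0 => xgp P i 0
  | 1 => xgp P i 1
  | r + 2 => acoef P i • sbr false (P.par i) (htilY P (i + 1)) (xpn P i (r + 1))

/-- The recursively defined higher generators
`x^−_{α_i,r+1} := −a_{i+1,i}⁻¹ [h̃_{α_{i+1},1}, x^−_{α_i,r}]` (`r ≥ 1`). -/
def xmn (P : SimpleRootSystem m n) (i : Fin (m + n)) : ℕ → Ymin P
  | 0 => xgm P i 0
  | 1 => xgm P i 1
  | r + 2 => (-acoef P i) • sbr false (P.par i) (htilY P (i + 1)) (xmn P i (r + 1))

/-- The recursively defined higher Cartan generators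
`h_{α_i,r+1} := [x^+_{α_i,r+1}, x^−_{α_i,0}]` (`r ≥ 1`). -/
def hcn (P : SimpleRootSystem m n) (i : Fin (m + n)) : ℕ → Ymin P
  | 0 => hg P i 0
  | 1 => hg P i 1
  | r + 2 => sbr (P.par i) (P.par i) (xpn P i (r + 2)) (xmn P i 0)

end MinDefs

end ASY

/-!
The elements `h̃_{α_i,1}` commute with each other, so the recursion defining the higher generators
propagates `[h̃_{α_i,1}, x^±_{α_k,r}] = ± a_{ik} x^±_{α_k,r+1}` from `r = 0` to all `r`.  On a Dynkin
diagram that is a cycle with at least five nodes, `j − 2` is adjacent to `j − 1` but not to `j` or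
`j + 1`.  Hence the derivation `ad h̃_{α_{j−2},1}` multiplies the odd Serre expression by a unit and
raises `r` by one; symmetrically `ad h̃_{α_{j+2},1}` raises `s`.  Applying these derivations
repeatedly to the defining relation `r = s = 0` gives the relation in all degrees.
-/

namespace ASY

section LieModule

variable {K L M : Type*} [CommRing K] [LieRing L] [LieAlgebra K L]
  [AddCommGroup M] [Module K M] [LieRingModule L M] [LieModule K L M]

lemma lie_eq_smul_succ {h k : L} (hk : ⁅h, k⁆ = 0) {x : ℕ → M} {a b : K} (hb : IsUnit b)
    (hkx : ∀ r, ⁅k, x r⁆ = b • x (r + 1)) (h0 : ⁅h, x 0⁆ = a • x 1) (r : ℕ) :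
    ⁅h, x r⁆ = a • x (r + 1) := by
  induction r with
  | zero => exact h0
  | succ r ih =>
    refine hb.smul_left_cancel.mp ?_
    calc b • ⁅h, x (r + 1)⁆ = ⁅h, ⁅k, x r⁆⁆ := by rw [hkx, lie_smul]
      _ = ⁅k, ⁅h, x r⁆⁆ := by rw [leibniz_lie, hk, zero_lie, zero_add]
      _ = b • a • x (r + 2) := by rw [ih, lie_smul, hkx, smul_comm]

end LieModule

attribute [local instance] LieRing.ofAssociativeRing

section SuperBracket

variable {Y : Type*} [Ring Y] [Algebra R Y]

lemma sbr_false_left (q : Bool) (x y : Y) : sbr false q x y = ⁅x, y⁆ := by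
  simp [sbr, sg, Ring.lie_def]

lemma lie_sbr (p q : Bool) (h x y : Y) :
    ⁅h, sbr p q x y⁆ = sbr p q ⁅h, x⁆ y + sbr p q x ⁅h, y⁆ := by
  simp only [sbr, Ring.lie_def, mul_sub, sub_mul, mul_smul_comm, smul_mul_assoc, smul_sub,
    mul_assoc]
  abel

lemma sbr_smul_left (p q : Bool) (c : R) (x y : Y) : sbr p q (c • x) y = c • sbr p q x y := by
  simp only [sbr, mul_smul_comm, smul_mul_assoc, smul_sub, smul_comm c]

lemma sbr_smul_right (p q : Bool) (c : R) (x y : Y) : sbr p q x (c • y) = c • sbr p q x y := by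
  simp only [sbr, mul_smul_comm, smul_mul_assoc, smul_sub, smul_comm c]

lemma sbr_zero_left (p q : Bool) (y : Y) : sbr p q 0 y = 0 := by simp [sbr]

lemma sbr_zero_right (p q : Bool) (x : Y) : sbr p q x 0 = 0 := by simp [sbr]

/-- The left-hand side `[[x, z], [z, w]]` of the odd Serre relation, for `x` of parity `p`,
`w` of parity `q` and `z` odd. -/
def oddSerre (p q : Bool) (x z w : Y) : Y :=
  sbr (xor p true) (xor true q) (sbr p true x z) (sbr true q z w)

variable (p q : Bool)

lemma oddSerre_smul_left (c : R) (x z w : Y) :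
    oddSerre p q (c • x) z w = c • oddSerre p q x z w := by
  simp only [oddSerre, sbr_smul_left]

lemma oddSerre_smul_right (c : R) (x z w : Y) :
    oddSerre p q x z (c • w) = c • oddSerre p q x z w := by
  simp only [oddSerre, sbr_smul_right]

lemma oddSerre_zero_left (z w : Y) : oddSerre p q 0 z w = 0 := by
  simp only [oddSerre, sbr_zero_left]

lemma oddSerre_zero_right (x z : Y) : oddSerre p q x z 0 = 0 := by
  simp only [oddSerre, sbr_zero_right]

variable {p q}

lemma lie_oddSerre {h z : Y} (hz : ⁅h, z⁆ = 0) (x w : Y) :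
    ⁅h, oddSerre p q x z w⁆ = oddSerre p q ⁅h, x⁆ z w + oddSerre p q x z ⁅h, w⁆ := by
  simp only [oddSerre, lie_sbr, hz, sbr_zero_left, sbr_zero_right, add_zero, zero_add]

lemma oddSerre_eq_zero_of_lie_left {h x x' z w : Y} {c : R} (hc : IsUnit c)
    (hx : ⁅h, x⁆ = c • x') (hz : ⁅h, z⁆ = 0) (hw : ⁅h, w⁆ = 0)
    (hxzw : oddSerre p q x z w = 0) : oddSerre p q x' z w = 0 := by
  have key := lie_oddSerre (p := p) (q := q) hz x w
  rw [hxzw, lie_zero h, hx, hw, oddSerre_zero_right, add_zero, oddSerre_smul_left] at key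
  exact hc.smul_eq_zero.mp key.symm

lemma oddSerre_eq_zero_of_lie_right {h x z w w' : Y} {c : R} (hc : IsUnit c)
    (hx : ⁅h, x⁆ = 0) (hz : ⁅h, z⁆ = 0) (hw : ⁅h, w⁆ = c • w')
    (hxzw : oddSerre p q x z w = 0) : oddSerre p q x z w' = 0 := by
  have key := lie_oddSerre (p := p) (q := q) hz x w
  rw [hxzw, lie_zero h, hx, hw, oddSerre_zero_left, zero_add, oddSerre_smul_right] at key
  exact hc.smul_eq_zero.mp key.symm

end SuperBracket

section Cartan

open scoped Fin.CommRing

lemma add_natCast_ne_self {N : ℕ} [NeZero N] (i : Fin N) {k : ℕ} (hk : 0 < k) (hkN : k < N) :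
    i + k ≠ i := by
  rw [Ne, add_eq_left, Fin.natCast_eq_zero]
  exact Nat.not_dvd_of_pos_of_lt hk hkN

namespace SimpleRootSystem

variable {m n : ℕ} (P : SimpleRootSystem m n)

lemma isUnit_w (i : Fin (m + n)) : IsUnit (P.w i) := by
  unfold w
  split_ifs <;> simp

variable [NeZero (m + n)]

lemma a_comm (i j : Fin (m + n)) : P.a i j = P.a j i :=
  Finset.sum_congr rfl fun _ _ => mul_right_comm _ _ _

lemma a_eq (i j : Fin (m + n)) :
    P.a i j = P.w i * coeffα j i - P.w (i + 1) * coeffα j (i + 1) := by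
  simp [a, coeffα.eq_1 i, mul_sub, sub_mul, Finset.sum_sub_distrib]

lemma isUnit_a_of_eq_add_one (hN : 3 ≤ m + n) {i j : Fin (m + n)} (hj : j = i + 1) :
    IsUnit (P.a i j) := by
  subst hj
  have add_one_ne (k : Fin (m + n)) : k + 1 ≠ k :=
    mod_cast add_natCast_ne_self k (k := 1) (by omega) (by omega)
  have add_two_ne : i + 1 + 1 ≠ i := by
    simpa [add_assoc, one_add_one_eq_two] using
      add_natCast_ne_self i (k := 2) (by omega) (by omega)
  have ha : P.a i (i + 1) = -P.w (i + 1) := by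
    simp [a_eq, coeffα, (add_one_ne _).symm, add_two_ne.symm, -left_eq_add]
  exact ha ▸ (P.isUnit_w _).neg

lemma isUnit_a_add_one_left (hN : 3 ≤ m + n) (k : Fin (m + n)) : IsUnit (P.a (k + 1) k) :=
  P.a_comm k (k + 1) ▸ P.isUnit_a_of_eq_add_one hN rfl

lemma a_eq_zero_of_eq_add {i j : Fin (m + n)} {k : ℕ} (hj : j = i + k) (hk : 2 ≤ k)
    (hkN : k + 2 ≤ m + n) : P.a i j = 0 := by
  have h₀ : j ≠ i := hj ▸ add_natCast_ne_self i (by omega) (by omega)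
  have h₁ : j + 1 ≠ i := by
    simpa [hj, add_assoc] using add_natCast_ne_self i (k := k + 1) (by omega) (by omega)
  have h₂ : j ≠ i + 1 := by
    obtain ⟨l, rfl⟩ := Nat.exists_eq_add_of_le' hk
    have := add_natCast_ne_self (i + 1) (k := l + 1) (by omega) (by omega)
    rw [hj]
    convert this using 1
    push_cast
    ring
  simp [a_eq, coeffα, h₀.symm, h₁.symm, h₂.symm]

/-- The generators `x^+` and `x^−` are the cases `ε = 1` and `ε = -1`. -/
lemma oddSerre_eq_zero_of_degree_zero {Y : Type*} [Ring Y] [Algebra R Y] (hN : 5 ≤ m + n)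
    {h : Fin (m + n) → Y} {x : Fin (m + n) → ℕ → Y} {ε : R} (hε : IsUnit ε)
    (hx : ∀ i k r, ⁅h i, x k r⁆ = (ε * (P.a i k : R)) • x k (r + 1))
    {p q : Bool} {j : Fin (m + n)} (h₀ : oddSerre p q (x (j - 1) 0) (x j 0) (x (j + 1) 0) = 0)
    (r s : ℕ) : oddSerre p q (x (j - 1) r) (x j 0) (x (j + 1) s) = 0 := by
  have raise_unit {i k} (ha : IsUnit (P.a i k)) : IsUnit (ε * (P.a i k : R)) :=
    hε.mul (ha.map (Int.castRingHom R))
  have lie_zero_of {i k} (ha : P.a i k = 0) (r : ℕ) : ⁅h i, x k r⁆ = 0 := by simp [hx, ha]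
  induction r with
  | succ r ih =>
    refine oddSerre_eq_zero_of_lie_left (raise_unit ?_) (hx (j - 2) _ r) (lie_zero_of ?_ 0)
      (lie_zero_of ?_ s) ih
    · exact P.isUnit_a_of_eq_add_one (by omega) (by ring)
    · exact P.a_eq_zero_of_eq_add (k := 2) (by push_cast; ring) (by omega) (by omega)
    · exact P.a_eq_zero_of_eq_add (k := 3) (by push_cast; ring) (by omega) (by omega)
  | zero =>
    induction s with
    | zero => exact h₀
    | succ s ih =>
      refine oddSerre_eq_zero_of_lie_right (raise_unit ?_) (lie_zero_of ?_ 0) (lie_zero_of ?_ 0)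
        (hx (j + 2) _ s) ih <;> rw [a_comm]
      · exact P.isUnit_a_of_eq_add_one (by omega) (by ring)
      · exact P.a_eq_zero_of_eq_add (k := 3) (by push_cast; ring) (by omega) (by omega)
      · exact P.a_eq_zero_of_eq_add (k := 2) (by push_cast; ring) (by omega) (by omega)

end SimpleRootSystem

end Cartan

section Yangian

variable {m n : ℕ} [NeZero (m + n)] (P : SimpleRootSystem m n)

lemma mkY_eq_of_rel {x y : MFree m n} (h : MRel P x y) : mkY P x = mkY P y :=
  RingQuot.mkAlgHom_rel R h

lemma mkY_sbr (p q : Bool) (x y : MFree m n) :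
    mkY P (sbr p q x y) = sbr p q (mkY P x) (mkY P y) := by
  simp [sbr]

lemma mkY_oddSerre (p q : Bool) (x z w : MFree m n) :
    mkY P (oddSerre p q x z w) = oddSerre p q (mkY P x) (mkY P z) (mkY P w) := by
  simp only [oddSerre, mkY_sbr]

lemma hg_commute (i j : Fin (m + n)) (r s : Fin 2) : Commute (hg P i r) (hg P j s) := by
  have h := mkY_eq_of_rel P (MRel.hh i j r s)
  rwa [mkY_sbr, sbr_false_left, map_zero, ← commute_iff_lie_eq] at h

lemma htilY_eq (i : Fin (m + n)) :
    htilY P i = hg P i 1 - (half * hbar) • (hg P i 0 * hg P i 0) := by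
  simp [htilY, MHt, hg]

lemma htilY_commute (i j : Fin (m + n)) : Commute (htilY P i) (htilY P j) := by
  have hg_htilY (i r) : Commute (hg P i r) (htilY P j) := by
    rw [htilY_eq]
    exact Commute.sub_right (R := Ymin P) (hg_commute P ..)
      (((hg_commute P ..).mul_right (hg_commute P ..)).smul_right _)
  rw [htilY_eq P i]
  exact Commute.sub_left (R := Ymin P) (hg_htilY i 1)
    (((hg_htilY i 0).mul_left (hg_htilY i 0)).smul_left _)

lemma lie_htilY_xpn_zero (i k : Fin (m + n)) :
    ⁅htilY P i, xpn P k 0⁆ = (P.a i k : R) • xpn P k 1 := by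
  have h := mkY_eq_of_rel P (MRel.htxp i k)
  rwa [mkY_sbr, sbr_false_left, map_smul] at h

lemma lie_htilY_xmn_zero (i k : Fin (m + n)) :
    ⁅htilY P i, xmn P k 0⁆ = (-(P.a i k : R)) • xmn P k 1 := by
  have h := mkY_eq_of_rel P (MRel.htxm i k)
  rwa [mkY_sbr, sbr_false_left, map_smul] at h

variable {P}

lemma a_mul_acoef {k : Fin (m + n)} (ha : P.a (k + 1) k ≠ 0) :
    (P.a (k + 1) k : R) * acoef P k = 1 := by
  rw [acoef, ← map_intCast (Polynomial.C : ℂ →+* R), ← Polynomial.C_mul,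
    mul_inv_cancel₀ (Int.cast_ne_zero.mpr ha), Polynomial.C_1]

lemma lie_htilY_add_one_xpn {k : Fin (m + n)} (ha : P.a (k + 1) k ≠ 0) :
    ∀ r, ⁅htilY P (k + 1), xpn P k r⁆ = (P.a (k + 1) k : R) • xpn P k (r + 1)
  | 0 => lie_htilY_xpn_zero P _ _
  | r + 1 => by rw [xpn, sbr_false_left, smul_smul, a_mul_acoef ha, one_smul]

lemma lie_htilY_add_one_xmn {k : Fin (m + n)} (ha : P.a (k + 1) k ≠ 0) :
    ∀ r, ⁅htilY P (k + 1), xmn P k r⁆ = (-(P.a (k + 1) k : R)) • xmn P k (r + 1)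
  | 0 => lie_htilY_xmn_zero P _ _
  | r + 1 => by rw [xmn, sbr_false_left, smul_smul, neg_mul_neg, a_mul_acoef ha, one_smul]

variable (P)

lemma lie_htilY_xpn (hN : 3 ≤ m + n) (i k : Fin (m + n)) (r : ℕ) :
    ⁅htilY P i, xpn P k r⁆ = (P.a i k : R) • xpn P k (r + 1) :=
  have ha := P.isUnit_a_add_one_left hN k
  lie_eq_smul_succ (htilY_commute P i (k + 1)).lie_eq (ha.map (Int.castRingHom R))
    (lie_htilY_add_one_xpn ha.ne_zero) (lie_htilY_xpn_zero P i k) r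

lemma lie_htilY_xmn (hN : 3 ≤ m + n) (i k : Fin (m + n)) (r : ℕ) :
    ⁅htilY P i, xmn P k r⁆ = (-(P.a i k : R)) • xmn P k (r + 1) :=
  have ha := P.isUnit_a_add_one_left hN k
  lie_eq_smul_succ (htilY_commute P i (k + 1)).lie_eq (ha.map (Int.castRingHom R)).neg
    (lie_htilY_add_one_xmn ha.ne_zero) (lie_htilY_xmn_zero P i k) r

lemma oddSerre_xpn_zero {j : Fin (m + n)} (hj : P.par j = true) :
    oddSerre (P.par (j - 1)) (P.par (j + 1)) (xpn P (j - 1) 0) (xpn P j 0) (xpn P (j + 1) 0)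
      = 0 := by
  have h := mkY_eq_of_rel P (MRel.oddSp j hj)
  rwa [← oddSerre, mkY_oddSerre, map_zero] at h

lemma oddSerre_xmn_zero {j : Fin (m + n)} (hj : P.par j = true) :
    oddSerre (P.par (j - 1)) (P.par (j + 1)) (xmn P (j - 1) 0) (xmn P j 0) (xmn P (j + 1) 0)
      = 0 := by
  have h := mkY_eq_of_rel P (MRel.oddSm j hj)
  rwa [← oddSerre, mkY_oddSerre, map_zero] at h

theorem odd_serre_all_degrees_general (hN : 5 ≤ m + n) {j : Fin (m + n)} (hj : P.par j = true)
    (r s : ℕ) :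
    oddSerre (P.par (j - 1)) (P.par (j + 1)) (xpn P (j - 1) r) (xpn P j 0) (xpn P (j + 1) s) = 0 ∧
      oddSerre (P.par (j - 1)) (P.par (j + 1)) (xmn P (j - 1) r) (xmn P j 0) (xmn P (j + 1) s)
        = 0 := by
  constructor
  · refine P.oddSerre_eq_zero_of_degree_zero hN isUnit_one (h := htilY P) (fun i k r => ?_)
      (oddSerre_xpn_zero P hj) r s
    rw [one_mul, lie_htilY_xpn P (by omega)]
  · refine P.oddSerre_eq_zero_of_degree_zero hN isUnit_one.neg (h := htilY P) (fun i k r => ?_)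
      (oddSerre_xmn_zero P hj) r s
    rw [neg_one_mul, lie_htilY_xmn P (by omega)]

end Yangian

/-- In the minimalistic affine super Yangian `Y_ℏ(ŝl(m|n,Π))` with
recursively defined higher generators, the odd Serre relation holds in all degrees: for
every odd simple root `α_j` and all `r, s ∈ ℤ_{≥0}`,
`[[x^±_{α_{j−1},r}, x^±_{α_j,0}], [x^±_{α_j,0}, x^±_{α_{j+1},s}]] = 0`. -/
theorem odd_serre_all_degrees (m n : ℕ) [NeZero (m + n)]
    (hm : 2 ≤ m) (hn : 2 ≤ n) (hmn : m ≠ n)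
    (P : SimpleRootSystem m n) :
    ∀ j : Fin (m + n), P.par j = true → ∀ r s : ℕ,
      sbr (xor (P.par (j - 1)) true) (xor true (P.par (j + 1)))
        (sbr (P.par (j - 1)) true (xpn P (j - 1) r) (xpn P j 0))
        (sbr true (P.par (j + 1)) (xpn P j 0) (xpn P (j + 1) s)) = 0 ∧
      sbr (xor (P.par (j - 1)) true) (xor true (P.par (j + 1)))
        (sbr (P.par (j - 1)) true (xmn P (j - 1) r) (xmn P j 0))
        (sbr true (P.par (j + 1)) (xmn P j 0) (xmn P (j + 1) s)) = 0 :=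
  fun _ hj r s => odd_serre_all_degrees_general P (by omega) hj r s

end ASY
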